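/- Suppose Leb has full support. Then for any subadditive potential Φ = {log φ_n}_{n≥1} over (X,T): ess sup_{x} limsup_{n→∞} (1/n)·log φ_n(x) ≤ sup{χ(μ,Φ) : μ ∈ O} ≤ limsup_{n→∞} (1/n)·ess sup_{x} log φ_n(x), where the essential suprema are taken with respect to Leb. -/

import Mathlib

open MeasureTheory Filter Topology
open scoped ENNReal

/-- The empirical probability measure `γ_{n+1,x} = (1/(n+1)) ∑_{j≤n} δ_{T^j x}` of the orbit
of `x` (indexed so that it is a probability measure for every index). -/
noncomputable def empiricalPM {X : Type*} [MeasurableSpace X] (T : X → X) (x : X) (n : ℕ) :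
    MeasureTheory.ProbabilityMeasure X :=
  ⟨(n + 1 : ℝ≥0∞)⁻¹ • ∑ j ∈ Finset.range (n + 1), MeasureTheory.Measure.dirac (T^[j] x), by
    constructor
    rw [Measure.smul_apply, Measure.finset_sum_apply]
    simp
    rw [ENNReal.inv_mul_cancel] <;> simp⟩

/-- The set `V(x)` of weak* limit points of the sequence of empirical measures of `x`. -/
def limitSet {X : Type*} [MeasurableSpace X] [TopologicalSpace X] [OpensMeasurableSpace X]
    (T : X → X) (x : X) : Set (MeasureTheory.ProbabilityMeasure X) :=
  {μ | ∃ φ : ℕ → ℕ, StrictMono φ ∧ Tendsto (fun j => empiricalPM T x (φ j)) atTop (𝓝 μ)}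

/-- `μ` is an observable (physical-like) measure for `(X, T, Leb)`: every weak* neighbourhood
`U` of `μ` (equivalently, every ε-ball around `μ` in a compatible metric) is intersected by
`V(x)` for a positive `Leb`-measure set of points `x`. -/
def IsObservable {X : Type*} [MeasurableSpace X] [TopologicalSpace X] [OpensMeasurableSpace X]
    (Leb : MeasureTheory.Measure X) (T : X → X) (μ : MeasureTheory.ProbabilityMeasure X) : Prop :=
  ∀ U : Set (MeasureTheory.ProbabilityMeasure X), IsOpen U → μ ∈ U →
    0 < Leb {x | (limitSet T x ∩ U).Nonempty}

/-- The Lyapunov exponent `χ(μ, Φ) = lim_n (1/n) ∫ log φ_n dμ` of a potential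
`Φ = {log φ_n}` (for invariant `μ` the limit exists by subadditivity, so it equals the
`liminf` used here); it takes values in `[-∞, ∞)`, i.e. in `EReal`. -/
noncomputable def lyapExp {X : Type*} [MeasurableSpace X] (φ : ℕ → X → ℝ)
    (μ : MeasureTheory.Measure X) : EReal :=
  liminf (fun n : ℕ => (((n : ℝ)⁻¹ * ∫ x, Real.log (φ n x) ∂μ : ℝ) : EReal)) atTop

/-!
Fix `x` and pass to a subsequence along which `(1/n) log φ_n(x)` tends to its limsup and the
empirical measures of `x` converge, to `μ` say. Cutting `[0, n)` into blocks of length `m`, with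
each of the `m` possible starting points, and averaging gives
`(1/n) log φ_n(x) ≤ (1/m) ∫ log φ_m dγ_{n,x} + O(1/n)`, hence `limsup ≤ (1/m) ∫ log φ_m dμ` for
every `m`, that is `limsup ≤ χ(μ, Φ)`. For almost every `x` all limit points of the empirical
measures are observable, because the space of probability measures is second countable. The second
inequality holds for every probability measure `μ`, since under full support a continuous function
is everywhere at most its essential supremum.
-/

/-- A subadditive potential over `(X, T)` in additive notation: `f n` stands for `log φ_n`.
The index `0` is unconstrained, since potentials are indexed by `n ≥ 1`. -/
def IsSubadditivePotential {X : Type*} (T : X → X) (f : ℕ → X → ℝ) : Prop :=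
  ∀ m n, 1 ≤ m → 1 ≤ n → ∀ x, f (m + n) x ≤ f m x + f n (T^[m] x)

lemma isSubadditivePotential_log {X : Type*} {T : X → X} {φ : ℕ → X → ℝ}
    (hpos : ∀ n, 1 ≤ n → ∀ x, 0 < φ n x)
    (hsub : ∀ m n, 1 ≤ m → 1 ≤ n → ∀ x, φ (m + n) x ≤ φ m x * φ n (T^[m] x)) :
    IsSubadditivePotential T fun n x => Real.log (φ n x) := by
  intro m n hm hn x
  rw [← Real.log_mul (hpos m hm x).ne' (hpos n hn _).ne']
  exact Real.log_le_log (hpos _ (by omega) x) (hsub m n hm hn x)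

/-- The sum over the `m` possible phases `r < m` of the value of a potential on the orbit segment
`[r, n)`; it is meant for `m ≤ n`, where the subtraction does not truncate. -/
def phaseSum {X : Type*} (T : X → X) (f : ℕ → X → ℝ) (m n : ℕ) (x : X) : ℝ :=
  ∑ r ∈ Finset.range m, f (n - r) (T^[r] x)

namespace IsSubadditivePotential

variable {X : Type*} {T : X → X} {f : ℕ → X → ℝ} {m n : ℕ} {B : ℝ}

lemma phaseSum_add_le (hf : IsSubadditivePotential T f) (hmn : m ≤ n) (x : X) :
    phaseSum T f m (m + n) x ≤ birkhoffSum T (f m) m x + phaseSum T f m n (T^[m] x) := by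
  rw [phaseSum, birkhoffSum, phaseSum, ← Finset.sum_add_distrib]
  refine Finset.sum_le_sum fun r hr => ?_
  have hrm : r < m := Finset.mem_range.1 hr
  have hsplit := hf m (n - r) (by omega) (by omega) (T^[r] x)
  rwa [← Nat.add_sub_assoc (by omega), ← Function.iterate_add_apply, Nat.add_comm m r,
    Function.iterate_add_apply] at hsplit

lemma mul_le_phaseSum_add (hf : IsSubadditivePotential T f) (hB₀ : 0 ≤ B)
    (hB : ∀ r ∈ Finset.Ico 1 m, ∀ x, f r x ≤ B) (hmn : m ≤ n) (x : X) :
    m * f n x ≤ phaseSum T f m n x + m * B := by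
  have hphase : ∀ r ∈ Finset.range m, f n x ≤ f (n - r) (T^[r] x) + B := by
    intro r hr
    have hrm : r < m := Finset.mem_range.1 hr
    rcases r.eq_zero_or_pos with rfl | hr₀
    · simpa using hB₀
    · have hsplit := hf r (n - r) hr₀ (by omega) x
      rw [Nat.add_sub_cancel' (by omega)] at hsplit
      linarith [hB r (Finset.mem_Ico.2 ⟨hr₀, hrm⟩) x]
  simpa [phaseSum, Finset.sum_add_distrib] using Finset.sum_le_sum hphase

lemma phaseSum_le_birkhoffSum_add (hf : IsSubadditivePotential T f) (hm : 1 ≤ m)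
    (hB : ∀ i ∈ Finset.Ico 1 (2 * m), ∀ x, |f i x| ≤ B) (hmn : m ≤ n) (x : X) :
    phaseSum T f m n x ≤ birkhoffSum T (f m) n x + 3 * m * B := by
  induction n using Nat.strong_induction_on generalizing x with
  | _ n ih =>
    rcases lt_or_ge n (2 * m) with hn | hn
    · have hupper : phaseSum T f m n x ≤ m * B := by
        simpa [phaseSum] using
          Finset.sum_le_card_nsmul (Finset.range m) (fun r => f (n - r) (T^[r] x)) B
            fun r hr => (abs_le.1 (hB (n - r) (by grind) _)).2
      have hlower : -(n * B) ≤ birkhoffSum T (f m) n x := by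
        simpa [birkhoffSum] using
          Finset.card_nsmul_le_sum (Finset.range n) (fun j => f m (T^[j] x)) (-B)
            fun j _ => (abs_le.1 (hB m (by grind) _)).1
      have hnB : n * B ≤ 2 * m * B := by
        have : 0 ≤ B := (abs_nonneg _).trans (hB m (by grind) x)
        gcongr
        exact_mod_cast hn.le
      linarith
    · obtain ⟨k, rfl⟩ := Nat.exists_eq_add_of_le hmn
      calc phaseSum T f m (m + k) x
        _ ≤ birkhoffSum T (f m) m x + phaseSum T f m k (T^[m] x) :=
          hf.phaseSum_add_le (by omega) x
        _ ≤ birkhoffSum T (f m) m x + (birkhoffSum T (f m) k (T^[m] x) + 3 * m * B) := by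
          gcongr
          exact ih k (by omega) (by omega) _
        _ = birkhoffSum T (f m) (m + k) x + 3 * m * B := by rw [birkhoffSum_add, add_assoc]

lemma mul_le_birkhoffSum_add (hf : IsSubadditivePotential T f) (hm : 1 ≤ m)
    (hB : ∀ i ∈ Finset.Ico 1 (2 * m), ∀ x, |f i x| ≤ B) (hmn : m ≤ n) (x : X) :
    m * f n x ≤ birkhoffSum T (f m) n x + 4 * m * B := by
  have hB₀ : 0 ≤ B := (abs_nonneg _).trans (hB m (by grind) x)
  have hstart := hf.mul_le_phaseSum_add hB₀
    (fun r hr y => (le_abs_self _).trans (hB r (by grind) y)) hmn x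
  linarith [hf.phaseSum_le_birkhoffSum_add hm hB hmn x]

lemma inv_mul_le_birkhoffAverage_add (hf : IsSubadditivePotential T f) (hm : 1 ≤ m)
    (hB : ∀ i ∈ Finset.Ico 1 (2 * m), ∀ x, |f i x| ≤ B) (hmn : m ≤ n) (x : X) :
    (n : ℝ)⁻¹ * f n x ≤ (m : ℝ)⁻¹ * birkhoffAverage ℝ T (f m) n x + (n : ℝ)⁻¹ * (4 * B) := by
  have hm₀ : (m : ℝ) ≠ 0 := by positivity
  calc (n : ℝ)⁻¹ * f n x = (n : ℝ)⁻¹ * ((m : ℝ)⁻¹ * (m * f n x)) := by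
        rw [inv_mul_cancel_left₀ hm₀]
    _ ≤ (n : ℝ)⁻¹ * ((m : ℝ)⁻¹ * (birkhoffSum T (f m) n x + 4 * m * B)) := by
        gcongr
        exact hf.mul_le_birkhoffSum_add hm hB hmn x
    _ = _ := by
        rw [birkhoffAverage, smul_eq_mul]
        field_simp

end IsSubadditivePotential

lemma exists_forall_mem_norm_le_of_continuous {ι X E : Type*} [TopologicalSpace X] [CompactSpace X]
    [SeminormedAddGroup E] (s : Finset ι) {f : ι → X → E} (hf : ∀ i ∈ s, Continuous (f i)) :
    ∃ B, ∀ i ∈ s, ∀ x, ‖f i x‖ ≤ B := by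
  have hbound : ∀ i ∈ s, ∃ B, ∀ x, ‖f i x‖ ≤ B := fun i hi => by
    simpa using isCompact_univ.exists_bound_of_continuousOn (hf i hi).continuousOn
  choose! B hB using hbound
  obtain ⟨M, hM⟩ := (s.image B).exists_le
  exact ⟨M, fun i hi x => (hB i hi x).trans (hM _ (Finset.mem_image_of_mem B hi))⟩

lemma integral_empiricalPM {X E : Type*} [MeasurableSpace X] [NormedAddCommGroup E]
    [NormedSpace ℝ E] [CompleteSpace E] (T : X → X) (x : X) (n : ℕ) {f : X → E}
    (hf : StronglyMeasurable f) :
    ∫ y, f y ∂(empiricalPM T x n : Measure X) = birkhoffAverage ℝ T f (n + 1) x := by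
  change ∫ y, f y ∂((n + 1 : ℝ≥0∞)⁻¹ • ∑ j ∈ Finset.range (n + 1), Measure.dirac (T^[j] x)) = _
  rw [integral_smul_measure, integral_finsetSum_measure fun j _ => integrable_dirac' hf (by simp)]
  simp only [integral_dirac' _ _ hf, ENNReal.toReal_inv, birkhoffAverage, birkhoffSum]
  norm_cast

lemma exists_mem_limitSet_tendsto_subseq {X : Type*} [TopologicalSpace X] [MeasurableSpace X]
    [OpensMeasurableSpace X] [SeqCompactSpace (ProbabilityMeasure X)] (T : X → X) (x : X)
    {u : ℕ → ℕ} (hu : Tendsto u atTop atTop) :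
    ∃ μ ∈ limitSet T x, ∃ v : ℕ → ℕ, StrictMono v ∧
      Tendsto (fun j => empiricalPM T x (u (v j))) atTop (𝓝 μ) := by
  obtain ⟨w, hw, huw⟩ := strictMono_subseq_of_tendsto_atTop hu
  obtain ⟨μ, v, hv, hlim⟩ := SeqCompactSpace.tendsto_subseq fun j => empiricalPM T x (u (w j))
  exact ⟨μ, ⟨u ∘ w ∘ v, huw.comp hv, hlim⟩, w ∘ v, hw.comp hv, hlim⟩

lemma ae_forall_mem_isOpen_measure_inter_pos {α Y : Type*} [MeasurableSpace α]
    [TopologicalSpace Y] [SecondCountableTopology Y] (μ : Measure α) (V : α → Set Y) :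
    ∀ᵐ a ∂μ, ∀ y ∈ V a, ∀ U, IsOpen U → y ∈ U → 0 < μ {b | (V b ∩ U).Nonempty} := by
  have hbasis : ∀ᵐ a ∂μ, ∀ W ∈ TopologicalSpace.countableBasis Y,
      (V a ∩ W).Nonempty → 0 < μ {b | (V b ∩ W).Nonempty} := by
    refine (ae_ball_iff (TopologicalSpace.countable_countableBasis Y)).2 fun W _ => ?_
    rcases eq_or_ne (μ {b | (V b ∩ W).Nonempty}) 0 with hzero | hne
    · filter_upwards [measure_eq_zero_iff_ae_notMem.1 hzero] with a ha hmeet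
      exact absurd hmeet ha
    · exact ae_of_all _ fun _ _ => pos_iff_ne_zero.2 hne
  filter_upwards [hbasis] with a ha y hy U hU hyU
  obtain ⟨W, hW, hyW, hWU⟩ :=
    (TopologicalSpace.isBasis_countableBasis Y).exists_subset_of_mem_open hyU hU
  exact (ha W hW ⟨y, hy, hyW⟩).trans_le
    (measure_mono fun b hb => hb.mono (Set.inter_subset_inter_right _ hWU))

lemma ae_forall_mem_limitSet_isObservable {X : Type*} [TopologicalSpace X] [MeasurableSpace X]
    [OpensMeasurableSpace X] [SecondCountableTopology (ProbabilityMeasure X)] (μ : Measure X)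
    (T : X → X) : ∀ᵐ x ∂μ, ∀ ν ∈ limitSet T x, IsObservable μ T ν :=
  ae_forall_mem_isOpen_measure_inter_pos μ (limitSet T)

lemma le_essSup_of_lowerSemicontinuous {X β : Type*} [TopologicalSpace X] [MeasurableSpace X]
    [CompleteLinearOrder β] [TopologicalSpace β] [OrderTopology β] [FirstCountableTopology β]
    (μ : Measure X) [μ.IsOpenPosMeasure] {f : X → β} (hf : LowerSemicontinuous f) (x : X) :
    f x ≤ essSup f μ := by
  by_contra! hlt
  have hnull : μ {y | ¬f y ≤ essSup f μ} = 0 := ae_iff.1 (ae_le_essSup (f := f))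
  simp only [not_le] at hnull
  exact (hf.isOpen_preimage (essSup f μ)).measure_ne_zero μ ⟨x, hlt⟩ hnull

section Compact

variable {X : Type*} [TopologicalSpace X] [CompactSpace X] [MeasurableSpace X]

lemma integral_le_essSup_of_continuous [OpensMeasurableSpace X] (μ ν : Measure X)
    [μ.IsOpenPosMeasure] [IsProbabilityMeasure ν] {f : X → ℝ} (hf : Continuous f) :
    ((∫ x, f x ∂ν : ℝ) : EReal) ≤ essSup (fun x => (f x : EReal)) μ := by
  obtain ⟨x, hx⟩ := exists_integral_le
    (hf.integrable_of_hasCompactSupport (μ := ν) (.of_compactSpace f))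
  exact (EReal.coe_le_coe hx).trans
    (le_essSup_of_lowerSemicontinuous μ (continuous_coe_real_ereal.comp hf).lowerSemicontinuous x)

lemma lyapExp_le_limsup_essSup [OpensMeasurableSpace X] (μ ν : Measure X)
    [μ.IsOpenPosMeasure] [IsProbabilityMeasure ν] {φ : ℕ → X → ℝ}
    (hcont : ∀ n, 1 ≤ n → Continuous fun x => Real.log (φ n x)) :
    lyapExp φ ν ≤ limsup (fun n : ℕ => (((n : ℝ)⁻¹ : ℝ) : EReal) *
      essSup (fun x => ((Real.log (φ n x) : ℝ) : EReal)) μ) atTop := by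
  refine (liminf_le_limsup (by isBoundedDefault) (by isBoundedDefault)).trans (limsup_le_limsup ?_)
  filter_upwards [eventually_ge_atTop 1] with n hn
  rw [EReal.coe_mul]
  exact mul_le_mul_of_nonneg_left (integral_le_essSup_of_continuous μ ν (hcont n hn))
    (EReal.coe_nonneg.2 (by positivity))

lemma tendsto_birkhoffAverage_of_tendsto_empiricalPM [OpensMeasurableSpace X] {ι : Type*}
    {l : Filter ι} {T : X → X} {x : X} {u : ι → ℕ} {μ : ProbabilityMeasure X}
    (hlim : Tendsto (fun i => empiricalPM T x (u i)) l (𝓝 μ)) {f : X → ℝ} (hf : Continuous f) :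
    Tendsto (fun i => birkhoffAverage ℝ T f (u i + 1) x) l (𝓝 (∫ y, f y ∂(μ : Measure X))) := by
  simpa [integral_empiricalPM T x _ hf.stronglyMeasurable] using
    ProbabilityMeasure.tendsto_iff_forall_integral_tendsto.1 hlim (.mkOfCompact ⟨f, hf⟩)

lemma IsSubadditivePotential.le_inv_mul_integral_of_tendsto [OpensMeasurableSpace X] {T : X → X}
    {f : ℕ → X → ℝ} (hf : IsSubadditivePotential T f) (hcont : ∀ n, 1 ≤ n → Continuous (f n))
    {ι : Type*} {l : Filter ι} [l.NeBot] {x : X} {u : ι → ℕ} (hu : Tendsto u l atTop)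
    {μ : ProbabilityMeasure X} (hμ : Tendsto (fun i => empiricalPM T x (u i)) l (𝓝 μ))
    {L : EReal}
    (hL : Tendsto (fun i => ((((u i + 1 : ℕ) : ℝ)⁻¹ * f (u i + 1) x : ℝ) : EReal)) l (𝓝 L))
    {m : ℕ} (hm : 1 ≤ m) :
    L ≤ (((m : ℝ)⁻¹ * ∫ y, f m y ∂(μ : Measure X) : ℝ) : EReal) := by
  obtain ⟨B, hB⟩ := exists_forall_mem_norm_le_of_continuous (Finset.Ico 1 (2 * m))
    fun i hi => hcont i (Finset.mem_Ico.1 hi).1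
  have hu' : Tendsto (fun i => u i + 1) l atTop := (tendsto_add_atTop_nat 1).comp hu
  have herror : Tendsto (fun i => ((u i + 1 : ℕ) : ℝ)⁻¹ * (4 * B)) l (𝓝 0) := by
    simpa using (tendsto_inv_atTop_nhds_zero_nat.comp hu').mul_const (4 * B)
  have hbound : Tendsto (fun i => (m : ℝ)⁻¹ * birkhoffAverage ℝ T (f m) (u i + 1) x +
      ((u i + 1 : ℕ) : ℝ)⁻¹ * (4 * B)) l (𝓝 ((m : ℝ)⁻¹ * ∫ y, f m y ∂(μ : Measure X))) := by
    simpa using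
      ((tendsto_birkhoffAverage_of_tendsto_empiricalPM hμ (hcont m hm)).const_mul _).add herror
  refine le_of_tendsto_of_tendsto hL ((continuous_coe_real_ereal.tendsto _).comp hbound) ?_
  filter_upwards [hu'.eventually_ge_atTop m] with i hi
  exact EReal.coe_le_coe (hf.inv_mul_le_birkhoffAverage_add hm hB hi x)

variable [TopologicalSpace.MetrizableSpace X] [BorelSpace X] {T : X → X}

lemma IsSubadditivePotential.exists_mem_limitSet_limsup_le {f : ℕ → X → ℝ}
    (hf : IsSubadditivePotential T f) (hcont : ∀ n, 1 ≤ n → Continuous (f n)) (x : X) :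
    ∃ μ ∈ limitSet T x, ∀ m : ℕ, 1 ≤ m →
      limsup (fun n : ℕ => (((n : ℝ)⁻¹ * f n x : ℝ) : EReal)) atTop ≤
        (((m : ℝ)⁻¹ * ∫ y, f m y ∂(μ : Measure X) : ℝ) : EReal) := by
  rw [← limsup_nat_add (fun n : ℕ => (((n : ℝ)⁻¹ * f n x : ℝ) : EReal)) 1]
  obtain ⟨u, hlimsup, hu⟩ := exists_seq_tendsto_limsup (f := atTop)
    (u := fun n : ℕ => ((((n + 1 : ℕ) : ℝ)⁻¹ * f (n + 1) x : ℝ) : EReal))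
  obtain ⟨μ, hμ, v, hv, hlim⟩ := exists_mem_limitSet_tendsto_subseq T x hu
  exact ⟨μ, hμ, fun m hm => hf.le_inv_mul_integral_of_tendsto hcont
    (hu.comp hv.tendsto_atTop) hlim (hlimsup.comp hv.tendsto_atTop) hm⟩

lemma exists_mem_limitSet_limsup_le_lyapExp {φ : ℕ → X → ℝ}
    (hcont : ∀ n, 1 ≤ n → Continuous (φ n)) (hpos : ∀ n, 1 ≤ n → ∀ x, 0 < φ n x)
    (hsub : ∀ m n, 1 ≤ m → 1 ≤ n → ∀ x, φ (m + n) x ≤ φ m x * φ n (T^[m] x)) (x : X) :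
    ∃ μ ∈ limitSet T x,
      limsup (fun n : ℕ => (((n : ℝ)⁻¹ * Real.log (φ n x) : ℝ) : EReal)) atTop ≤
        lyapExp φ (μ : Measure X) := by
  obtain ⟨μ, hμ, hle⟩ := (isSubadditivePotential_log hpos hsub).exists_mem_limitSet_limsup_le
    (fun n hn => (hcont n hn).log fun y => (hpos n hn y).ne') x
  exact ⟨μ, hμ, le_liminf_of_le (by isBoundedDefault) ((eventually_ge_atTop 1).mono hle)⟩

theorem essSup_limsup_le_sSup_lyapExp_observable (μ : Measure X) {φ : ℕ → X → ℝ}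
    (hcont : ∀ n, 1 ≤ n → Continuous (φ n)) (hpos : ∀ n, 1 ≤ n → ∀ x, 0 < φ n x)
    (hsub : ∀ m n, 1 ≤ m → 1 ≤ n → ∀ x, φ (m + n) x ≤ φ m x * φ n (T^[m] x)) :
    essSup (fun x => limsup (fun n : ℕ =>
        (((n : ℝ)⁻¹ * Real.log (φ n x) : ℝ) : EReal)) atTop) μ ≤
      sSup {c : EReal | ∃ ν : ProbabilityMeasure X,
        IsObservable μ T ν ∧ c = lyapExp φ (ν : Measure X)} := by
  refine essSup_le_of_ae_le _ ?_
  filter_upwards [ae_forall_mem_limitSet_isObservable μ T] with x hobs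
  obtain ⟨ν, hν, hle⟩ := exists_mem_limitSet_limsup_le_lyapExp hcont hpos hsub x
  exact hle.trans (le_sSup ⟨ν, hobs ν hν, rfl⟩)

end Compact

theorem essSup_limsup_le_sup_observable_le_limsup_essSup_general
    {X : Type*} [TopologicalSpace X] [CompactSpace X] [TopologicalSpace.MetrizableSpace X]
    [MeasurableSpace X] [BorelSpace X] (T : X → X) (Leb : Measure X) [Leb.IsOpenPosMeasure]
    (φ : ℕ → X → ℝ) (hcont : ∀ n, 1 ≤ n → Continuous (φ n))
    (hpos : ∀ n, 1 ≤ n → ∀ x, 0 < φ n x)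
    (hsub : ∀ m n, 1 ≤ m → 1 ≤ n → ∀ x, φ (m + n) x ≤ φ m x * φ n (T^[m] x)) :
    essSup (fun x => limsup (fun n : ℕ =>
          (((n : ℝ)⁻¹ * Real.log (φ n x) : ℝ) : EReal)) atTop) Leb
        ≤ sSup {c : EReal | ∃ μ : ProbabilityMeasure X,
            IsObservable Leb T μ ∧ c = lyapExp φ (μ : Measure X)} ∧
      sSup {c : EReal | ∃ μ : ProbabilityMeasure X,
            IsObservable Leb T μ ∧ c = lyapExp φ (μ : Measure X)}
        ≤ limsup (fun n : ℕ =>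
            (((n : ℝ)⁻¹ : ℝ) : EReal) *
              essSup (fun x => ((Real.log (φ n x) : ℝ) : EReal)) Leb) atTop := by
  refine ⟨essSup_limsup_le_sSup_lyapExp_observable Leb hcont hpos hsub, sSup_le ?_⟩
  rintro _ ⟨μ, -, rfl⟩
  exact lyapExp_le_limsup_essSup Leb μ
    fun n hn => (hcont n hn).log fun x => (hpos n hn x).ne'

/-- **Lemma 4.3.** For every subadditive potential `Φ = {log φ_n}` over `(X, T)` with `T` a
homeomorphism of a compact metric space `X` and `Leb` a fully supported Borel probability
reference measure:
`ess sup_x limsup_n (1/n) log φ_n(x) ≤ sup {χ(μ,Φ) : μ ∈ O} ≤ limsup_n (1/n) ess sup_x log φ_n(x)`,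
the essential suprema being taken with respect to `Leb`. -/
theorem essSup_limsup_le_sup_observable_le_limsup_essSup
    {X : Type*} [MetricSpace X] [CompactSpace X] [MeasurableSpace X] [BorelSpace X]
    (T : X → X) (hT : IsHomeomorph T)
    (Leb : MeasureTheory.Measure X) [IsProbabilityMeasure Leb]
    (hfull : ∀ U : Set X, IsOpen U → U.Nonempty → 0 < Leb U)
    (φ : ℕ → X → ℝ)
    (hcont : ∀ n, 1 ≤ n → Continuous (φ n))
    (hpos : ∀ n, 1 ≤ n → ∀ x, 0 < φ n x)
    (hsub : ∀ m n, 1 ≤ m → 1 ≤ n → ∀ x, φ (m + n) x ≤ φ m x * φ n (T^[m] x)) :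
    essSup (fun x => limsup (fun n : ℕ =>
          (((n : ℝ)⁻¹ * Real.log (φ n x) : ℝ) : EReal)) atTop) Leb
        ≤ sSup {c : EReal | ∃ μ : ProbabilityMeasure X,
            IsObservable Leb T μ ∧ c = lyapExp φ (μ : Measure X)} ∧
      sSup {c : EReal | ∃ μ : ProbabilityMeasure X,
            IsObservable Leb T μ ∧ c = lyapExp φ (μ : Measure X)}
        ≤ limsup (fun n : ℕ =>
            (((n : ℝ)⁻¹ : ℝ) : EReal) *
              essSup (fun x => ((Real.log (φ n x) : ℝ) : EReal)) Leb) atTop := by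
  have : Leb.IsOpenPosMeasure := ⟨fun U hU hne => (hfull U hU hne).ne'⟩
  exact essSup_limsup_le_sup_observable_le_limsup_essSup_general T Leb φ hcont hpos hsub
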